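/- Let b be a connected graph over a countably infinite set X, let q : X → ℝ be a potential, and let u, v ∈ F(X) be strictly positive functions that are H-superharmonic on X and H-harmonic outside a finite set. Assume (a) u₀ := u/v is proper as a map X → (0,∞), and (b) sup_{x∼y} u₀(x)/u₀(y) < ∞. Then (uv)^{1/2} ∈ F(X); the function w := H[(uv)^{1/2}] / (uv)^{1/2} is nonnegative; for every finitely supported φ : X → ℝ one has h(φ) ≥ Σ_{x∈X} w(x)·φ(x)²; and for every x ∈ X with Hu(x) = Hv(x) = 0, w(x) = (1/2)·Σ_{y∈X} b(x,y)·[(u(y)/u(x))^{1/2} − (v(y)/v(x))^{1/2}]². -/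

import Mathlib

/-- `f` belongs to `F(X)`: `∑_y b x y |f y| < ∞` for every `x`. -/
def memF {X : Type} (b : X → X → ℝ) (f : X → ℝ) : Prop :=
  ∀ x : X, Summable fun y => b x y * |f y|

/-- The formal graph Laplacian `L f x = ∑_y b x y (f x - f y)`. -/
noncomputable def lap {X : Type} (b : X → X → ℝ) (f : X → ℝ) (x : X) : ℝ :=
  ∑' y : X, b x y * (f x - f y)

/-- The formal Schrödinger operator `H = L + q`. -/
noncomputable def schrod {X : Type} (b : X → X → ℝ) (q : X → ℝ) (f : X → ℝ) (x : X) : ℝ :=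
  lap b f x + q x * f x

/-- The quadratic form `h(φ)` of `H = L + q`. -/
noncomputable def quadForm {X : Type} (b : X → X → ℝ) (q : X → ℝ) (φ : X → ℝ) : ℝ :=
  (1 / 2) * (∑' p : X × X, b p.1 p.2 * (φ p.1 - φ p.2) ^ 2) + ∑' x : X, q x * φ x ^ 2

/-!
For a nowhere vanishing `f ∈ F(X)`, the ground state representation writes `h(φ)` as
`∑ (H f / f) φ ^ 2` plus a weighted energy of `φ / f`; if `f > 0` this energy is nonnegative, so
`h` dominates the weight `H f / f`. For `f = √(u v)`, completing the square in `√(u y / u x)` and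
`√(v y / v x)` shows that `H f / f` at `x` is the mean of `H u / u` and `H v / v` plus half a
weighted sum of squares.
-/

section Sums

variable {α β R : Type*} [TopologicalSpace R]

theorem summable_mul_prod_of_hasFiniteSupport [NonUnitalNonAssocSemiring R]
    [IsTopologicalSemiring R] {f : α → R} (hf : f.HasFiniteSupport) {g : α → β → R}
    (hg : ∀ a, Summable (g a)) : Summable fun p : α × β => f p.1 * g p.1 p.2 := by
  classical
  have summable_row (a : α) : Summable fun p : α × β => if p.1 = a then f a * g a p.2 else 0 := by
    refine ((Prod.mk_right_injective a).summable_iff ?_).mp ?_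
    · rintro ⟨a', y⟩ h
      exact if_neg fun haa' => h ⟨y, by rw [← haa']⟩
    · simpa only [Function.comp_def, if_true] using (hg a).mul_left (f a)
  obtain ⟨s, hs⟩ := hf.exists_finset_coe
  refine (summable_sum (s := s) fun a _ => summable_row a).congr fun p => ?_
  rw [Finset.sum_ite_eq, ite_eq_left_iff, ← Finset.mem_coe, hs, Function.notMem_support]
  intro hp
  rw [hp, zero_mul]

theorem tsum_mul_prod_of_hasFiniteSupport [NonUnitalNonAssocSemiring R] [IsTopologicalSemiring R]
    [T3Space R] {f : α → R} (hf : f.HasFiniteSupport) {g : α → β → R}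
    (hg : ∀ a, Summable (g a)) :
    ∑' p : α × β, f p.1 * g p.1 p.2 = ∑' a, f a * ∑' y, g a y := by
  rw [(summable_mul_prod_of_hasFiniteSupport hf hg).tsum_prod' fun a => (hg a).mul_left (f a)]
  exact tsum_congr fun a => (hg a).tsum_mul_left (f a)

theorem tsum_add_comp_swap [AddCommMonoid R] [ContinuousAdd R] [T2Space R] {G : α × α → R}
    (hG : Summable G) : ∑' p, (G p + G p.swap) = 2 • ∑' p, G p := by
  have hG_swap : Summable fun p : α × α => G p.swap := (Equiv.prodComm α α).summable_iff.mpr hG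
  rw [hG.tsum_add hG_swap, two_nsmul]
  congr 1
  exact (Equiv.prodComm α α).tsum_eq G

end Sums

section RealIdentities

theorem sqrt_mul_le_abs_add_abs (x y : ℝ) : √(x * y) ≤ |x| + |y| := by
  refine Real.sqrt_le_iff.mpr ⟨by positivity, ?_⟩
  calc x * y ≤ |x| * |y| := (le_abs_self _).trans_eq (abs_mul x y)
    _ ≤ (|x| + |y|) ^ 2 := by nlinarith [abs_nonneg x, abs_nonneg y]

theorem sqrt_sub_sqrt_sq {x y : ℝ} (hx : 0 ≤ x) (hy : 0 ≤ y) :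
    (√x - √y) ^ 2 = x + y - 2 * √(x * y) := by
  rw [sub_sq, Real.sq_sqrt hx, Real.sq_sqrt hy, Real.sqrt_mul hx]
  ring

theorem sub_sq_eq_ground_state {𝕜 : Type*} [Field 𝕜] {s t : 𝕜} (hs : s ≠ 0) (ht : t ≠ 0)
    (a c : 𝕜) :
    (a - c) ^ 2 =
      a ^ 2 * (1 - t / s) + c ^ 2 * (1 - s / t) + s * t * (a / s - c / t) ^ 2 := by
  field_simp
  ring

end RealIdentities

section Schrodinger

variable {X : Type} {b : X → X → ℝ} {f u v φ : X → ℝ}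

namespace memF

theorem summable_mul (hf : memF b f) (x : X) : Summable fun y => b x y * f y :=
  .of_abs <| by simpa only [abs_mul, abs_abs] using (hf x).abs

theorem sqrt_mul (hu : memF b u) (hv : memF b v) : memF b fun z => √(u z * v z) := by
  intro x
  refine .of_norm_bounded ((hu x).abs.add (hv x).abs) fun y => ?_
  simp only [Real.norm_eq_abs, abs_mul, abs_abs, abs_of_nonneg (Real.sqrt_nonneg _), ← mul_add]
  exact mul_le_mul_of_nonneg_left (sqrt_mul_le_abs_add_abs _ _) (abs_nonneg _)

theorem summable_mul_one_sub_div (hf : memF b f) {x : X} (hb : Summable (b x)) :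
    Summable fun y => b x y * (1 - f y / f x) :=
  (hb.sub ((hf.summable_mul x).div_const (f x))).congr fun y => by ring

end memF

theorem schrod_div_self (b : X → X → ℝ) (q : X → ℝ) {x : X} (hfx : f x ≠ 0) :
    schrod b q f x / f x = ∑' y, b x y * (1 - f y / f x) + q x := by
  rw [schrod, lap, add_div, mul_div_cancel_right₀ _ hfx, ← tsum_div_const]
  congr 1
  refine tsum_congr fun y => ?_
  rw [mul_div_assoc, sub_div, div_self hfx]

theorem schrod_sqrt_mul_div_sqrt_mul (q : X → ℝ) {x : X} (hb : Summable (b x))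
    (hu_mem : memF b u) (hv_mem : memF b v) (hu : ∀ y, 0 ≤ u y) (hv : ∀ y, 0 ≤ v y)
    (hux : u x ≠ 0) (hvx : v x ≠ 0) :
    schrod b q (fun z => √(u z * v z)) x / √(u x * v x) =
      (schrod b q u x / u x + schrod b q v x / v x) / 2 +
        (1 / 2) * ∑' y, b x y * (√(u y / u x) - √(v y / v x)) ^ 2 := by
  have square_expansion (y : X) : b x y * (√(u y / u x) - √(v y / v x)) ^ 2 =
      2 * (b x y * (1 - √(u y * v y) / √(u x * v x))) -
        (b x y * (1 - u y / u x) + b x y * (1 - v y / v x)) := by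
    rw [sqrt_sub_sqrt_sq (div_nonneg (hu y) (hu x)) (div_nonneg (hv y) (hv x)),
      div_mul_div_comm, Real.sqrt_div (mul_nonneg (hu y) (hv y))]
    ring
  have summable_u := hu_mem.summable_mul_one_sub_div hb
  have summable_v := hv_mem.summable_mul_one_sub_div hb
  have summable_sqrt := (hu_mem.sqrt_mul hv_mem).summable_mul_one_sub_div hb
  have sqrt_ne_zero : √(u x * v x) ≠ 0 :=
    Real.sqrt_ne_zero'.mpr ((mul_nonneg (hu x) (hv x)).lt_of_ne' (mul_ne_zero hux hvx))
  rw [schrod_div_self b q (f := fun z => √(u z * v z)) sqrt_ne_zero, schrod_div_self b q hux,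
    schrod_div_self b q hvx, tsum_congr square_expansion,
    (summable_sqrt.mul_left 2).tsum_sub (summable_u.add summable_v),
    summable_u.tsum_add summable_v, tsum_mul_left]
  ring

theorem summable_mul_sub_sq_of_hasFiniteSupport (hb_symm : ∀ x y, b x y = b y x)
    (hb_row : ∀ x, Summable (b x)) (hφ : φ.HasFiniteSupport) :
    Summable fun p : X × X => b p.1 p.2 * (φ p.1 - φ p.2) ^ 2 := by
  have summable_sq : Summable fun p : X × X => φ p.1 ^ 2 * b p.1 p.2 :=
    summable_mul_prod_of_hasFiniteSupport (hφ.fun_comp (g := (· ^ 2)) (zero_pow two_ne_zero)) hb_row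
  have summable_sq_swap : Summable fun p : X × X => φ p.2 ^ 2 * b p.2 p.1 :=
    (Equiv.prodComm X X).summable_iff.mpr summable_sq
  have summable_cross : Summable fun p : X × X => φ p.1 * (φ p.2 * b p.1 p.2) :=
    summable_mul_prod_of_hasFiniteSupport (g := fun x y => φ y * b x y) hφ fun x =>
      summable_of_hasFiniteSupport (hφ.mul_left (b x))
  refine ((summable_sq.add summable_sq_swap).sub (summable_cross.mul_left 2)).congr fun p => ?_
  rw [hb_symm p.2 p.1]
  ring

theorem tsum_schrod_div_mul_sq (q : X → ℝ) (hb_row : ∀ x, Summable (b x)) (hf : memF b f)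
    (hf_ne : ∀ x, f x ≠ 0) (hφ : φ.HasFiniteSupport) :
    ∑' x, schrod b q f x / f x * φ x ^ 2 =
      ∑' p : X × X, φ p.1 ^ 2 * (b p.1 p.2 * (1 - f p.2 / f p.1)) + ∑' x, q x * φ x ^ 2 := by
  have hφ_sq := hφ.fun_comp (g := (· ^ 2)) (zero_pow two_ne_zero)
  have summable_mul_sq (k : X → ℝ) : Summable fun x => k x * φ x ^ 2 :=
    summable_of_hasFiniteSupport (hφ_sq.mul_right k)
  rw [tsum_mul_prod_of_hasFiniteSupport hφ_sq fun x => hf.summable_mul_one_sub_div (hb_row x)]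
  simp only [schrod_div_self b q (hf_ne _), add_mul, mul_comm (φ _ ^ 2)]
  exact (summable_mul_sq _).tsum_add (summable_mul_sq q)

theorem quadForm_eq_ground_state_representation (q : X → ℝ) (hb_symm : ∀ x y, b x y = b y x)
    (hb_row : ∀ x, Summable (b x)) (hf : memF b f) (hf_ne : ∀ x, f x ≠ 0)
    (hφ : φ.HasFiniteSupport) :
    quadForm b q φ = ∑' x, schrod b q f x / f x * φ x ^ 2 +
      (1 / 2) * ∑' p : X × X,
        b p.1 p.2 * (f p.1 * f p.2 * (φ p.1 / f p.1 - φ p.2 / f p.2) ^ 2) := by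
  let G (p : X × X) : ℝ := φ p.1 ^ 2 * (b p.1 p.2 * (1 - f p.2 / f p.1))
  have summable_G : Summable G :=
    summable_mul_prod_of_hasFiniteSupport (hφ.fun_comp (g := (· ^ 2)) (zero_pow two_ne_zero))
      fun x => hf.summable_mul_one_sub_div (hb_row x)
  have summable_G_symm : Summable fun p => G p + G p.swap :=
    summable_G.add ((Equiv.prodComm X X).summable_iff.mpr summable_G)
  have remainder_eq (p : X × X) :
      b p.1 p.2 * (f p.1 * f p.2 * (φ p.1 / f p.1 - φ p.2 / f p.2) ^ 2) =
        b p.1 p.2 * (φ p.1 - φ p.2) ^ 2 - (G p + G p.swap) := by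
    rw [sub_sq_eq_ground_state (hf_ne p.1) (hf_ne p.2) (φ p.1)]
    simp only [G, Prod.fst_swap, Prod.snd_swap, hb_symm p.2 p.1]
    ring
  rw [tsum_congr remainder_eq,
    (summable_mul_sub_sq_of_hasFiniteSupport hb_symm hb_row hφ).tsum_sub summable_G_symm,
    tsum_add_comp_swap summable_G, tsum_schrod_div_mul_sq q hb_row hf hf_ne hφ, quadForm,
    two_nsmul]
  ring

theorem tsum_schrod_div_mul_sq_le_quadForm (q : X → ℝ) (hb_nonneg : ∀ x y, 0 ≤ b x y)
    (hb_symm : ∀ x y, b x y = b y x) (hb_row : ∀ x, Summable (b x)) (hf : memF b f)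
    (hf_pos : ∀ x, 0 < f x) (hφ : φ.HasFiniteSupport) :
    ∑' x, schrod b q f x / f x * φ x ^ 2 ≤ quadForm b q φ := by
  rw [quadForm_eq_ground_state_representation q hb_symm hb_row hf (fun x => (hf_pos x).ne') hφ]
  refine le_add_of_nonneg_right (mul_nonneg one_half_pos.le (tsum_nonneg fun p => ?_))
  exact mul_nonneg (hb_nonneg _ _)
    (mul_nonneg (mul_pos (hf_pos _) (hf_pos _)).le (sq_nonneg _))

theorem stmt2_general (q : X → ℝ) (hb_nonneg : ∀ x y, 0 ≤ b x y)
    (hb_symm : ∀ x y, b x y = b y x) (hb_row : ∀ x, Summable (b x))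
    (hu_mem : memF b u) (hv_mem : memF b v) (hu_pos : ∀ x, 0 < u x) (hv_pos : ∀ x, 0 < v x)
    (w : X → ℝ) (hw : ∀ x, w x = schrod b q (fun z => √(u z * v z)) x / √(u x * v x)) :
    memF b (fun z => √(u z * v z)) ∧
    (∀ x, 0 ≤ schrod b q u x → 0 ≤ schrod b q v x → 0 ≤ w x) ∧
    (∀ φ : X → ℝ, φ.HasFiniteSupport → quadForm b q φ ≥ ∑' x, w x * φ x ^ 2) ∧
    (∀ x, schrod b q u x = 0 → schrod b q v x = 0 →
      w x = (1 / 2) * ∑' y, b x y * (√(u y / u x) - √(v y / v x)) ^ 2) := by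
  have sqrt_mem := hu_mem.sqrt_mul hv_mem
  have sqrt_pos (x : X) : 0 < √(u x * v x) := Real.sqrt_pos.mpr (mul_pos (hu_pos x) (hv_pos x))
  have w_eq (x : X) := (hw x).trans <| schrod_sqrt_mul_div_sqrt_mul q (hb_row x) hu_mem hv_mem
    (fun y => (hu_pos y).le) (fun y => (hv_pos y).le) (hu_pos x).ne' (hv_pos x).ne'
  refine ⟨sqrt_mem, fun x hux hvx => ?_, fun φ hφ => ?_, fun x hux hvx => ?_⟩
  · have sum_sq_nonneg : 0 ≤ ∑' y, b x y * (√(u y / u x) - √(v y / v x)) ^ 2 :=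
      tsum_nonneg fun y => mul_nonneg (hb_nonneg x y) (sq_nonneg _)
    have mean_nonneg : 0 ≤ (schrod b q u x / u x + schrod b q v x / v x) / 2 :=
      div_nonneg (add_nonneg (div_nonneg hux (hu_pos x).le) (div_nonneg hvx (hv_pos x).le))
        zero_le_two
    rw [w_eq x]
    exact add_nonneg mean_nonneg (mul_nonneg one_half_pos.le sum_sq_nonneg)
  · simpa only [hw] using
      tsum_schrod_div_mul_sq_le_quadForm q hb_nonneg hb_symm hb_row sqrt_mem sqrt_pos hφ
  · simpa only [hux, hvx, zero_div, add_zero, zero_add] using w_eq x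

end Schrodinger

/-- the supersolution construction yields a Hardy weight. -/
theorem stmt2 (X : Type) [Countable X] [Infinite X]
    (b : X → X → ℝ) (q : X → ℝ)
    (hb_nonneg : ∀ x y, 0 ≤ b x y) (hb_symm : ∀ x y, b x y = b y x)
    (hb_diag : ∀ x, b x x = 0) (hb_row : ∀ x, Summable fun y => b x y)
    (hconn : ∀ x y : X, Relation.ReflTransGen (fun a c => 0 < b a c) x y)
    (u v : X → ℝ) (hu_mem : memF b u) (hv_mem : memF b v)
    (hu_pos : ∀ x, 0 < u x) (hv_pos : ∀ x, 0 < v x)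
    (hu_super : ∀ x, 0 ≤ schrod b q u x) (hv_super : ∀ x, 0 ≤ schrod b q v x)
    (K : Set X) (hK : K.Finite)
    (hu_harm : ∀ x ∉ K, schrod b q u x = 0) (hv_harm : ∀ x ∉ K, schrod b q v x = 0)
    (hproper : ∀ I : Set ℝ, IsCompact I → I ⊆ Set.range (fun x => u x / v x) →
      ((fun x => u x / v x) ⁻¹' I).Finite)
    (hosc : ∃ C : ℝ, ∀ x y, 0 < b x y → (u x / v x) / (u y / v y) ≤ C)
    (w : X → ℝ)
    (hw : ∀ x, w x = schrod b q (fun z => Real.sqrt (u z * v z)) x / Real.sqrt (u x * v x)) :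
    memF b (fun z => Real.sqrt (u z * v z)) ∧
    (∀ x, 0 ≤ w x) ∧
    (∀ φ : X → ℝ, (Function.support φ).Finite →
      quadForm b q φ ≥ ∑' x : X, w x * φ x ^ 2) ∧
    (∀ x, schrod b q u x = 0 → schrod b q v x = 0 →
      w x = (1 / 2) * ∑' y : X, b x y *
        (Real.sqrt (u y / u x) - Real.sqrt (v y / v x)) ^ 2) := by
  obtain ⟨sqrt_mem, nonneg, hardy, harmonic⟩ :=
    stmt2_general q hb_nonneg hb_symm hb_row hu_mem hv_mem hu_pos hv_pos w hw
  exact ⟨sqrt_mem, fun x => nonneg x (hu_super x) (hv_super x), hardy, harmonic⟩
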